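/- Let g ≥ 2 and let H ⊆ GSp_{2g}(ℤ_2) be a subgroup such that H equals the full preimage under mod-2 reduction of its mod-2 image H(2), and such that H(2) contains the embedded copy of S_{2g+1}. Then the homomorphism H → (H(2))^{ab} × (ℤ_2)^× whose first component is mod-2 reduction followed by abelianization and whose second component is the multiplier map mult, induces an isomorphism H/[H,H]‾ ≅ (H(2))^{ab} × (ℤ_2)^×, where [H,H]‾ is the closure of the commutator subgroup of H. -/

import Mathlib

open Matrix

/-- The standard symplectic matrix `Ω`, block-diagonal with `2×2` blocks `[[0,1],[-1,0]]`. -/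
def OmegaMat (g : ℕ) (R : Type) [CommRing R] : Matrix (Fin (2*g)) (Fin (2*g)) R :=
  Matrix.of fun i j =>
    if (i : ℕ) + 1 = (j : ℕ) ∧ (j : ℕ) % 2 = 1 then 1
    else if (j : ℕ) + 1 = (i : ℕ) ∧ (i : ℕ) % 2 = 1 then -1 else 0

/-- The symplectic group `Sp_{2g}(R)`, as a set of invertible matrices:
those `S` with `SᵀΩS = Ω`. -/
def SpSet (g : ℕ) (R : Type) [CommRing R] : Set (GL (Fin (2*g)) R) :=
  {S | (S : Matrix (Fin (2*g)) (Fin (2*g)) R)ᵀ * OmegaMat g R * S = OmegaMat g R}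

/-- The general symplectic group `GSp_{2g}(R)`, as a set of invertible matrices:
those `S` with `SᵀΩS = m·Ω` for some unit `m` (the multiplier). -/
def GSpSet (g : ℕ) (R : Type) [CommRing R] : Set (GL (Fin (2*g)) R) :=
  {S | ∃ m : Rˣ, (S : Matrix (Fin (2*g)) (Fin (2*g)) R)ᵀ * OmegaMat g R * S = (m : R) • OmegaMat g R}

/-- The all-ones vector `t ∈ V = (ℤ/2ℤ)^{2g+2}`. -/
def tvec (g : ℕ) : Fin (2*g+2) → ZMod 2 := fun _ => 1

/-- The line spanned by `t`. -/
def tline (g : ℕ) : Submodule (ZMod 2) (Fin (2*g+2) → ZMod 2) :=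
  Submodule.span (ZMod 2) {tvec g}

/-- `t^⊥`: the vectors of `V` orthogonal to `t` for the standard bilinear form
`⟨u,v⟩ = ∑ uᵢvᵢ`, i.e. those whose coordinates sum to zero. -/
def tperp (g : ℕ) : Set (Fin (2*g+2) → ZMod 2) := {v | ∑ i, v i = 0}

/-- The matrix of the map `ψ : M → V` sending the symplectic basis vector `f_{1,n}`
(column `2n-2`, 0-based) of `M = (ℤ/2ℤ)^{2g}` to `ē_1 + ⋯ + ē_{2n}` and `f_{2,n}`
(column `2n-1`) to `ē_{2n+1} + ē_1 + ⋯ + ē_{2n-1}`; `ψ` composed with the quotient map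
`t^⊥ → W = t^⊥/span(t)` is the identification of `M` with `W` used to realize the
isometries of `W` as the matrix group `Sp_{2g}(ℤ/2ℤ)`. -/
def PsiMat (g : ℕ) : Matrix (Fin (2*g+2)) (Fin (2*g)) (ZMod 2) :=
  Matrix.of fun k j =>
    if (j : ℕ) % 2 = 0 then (if (k : ℕ) < (j : ℕ) + 2 then 1 else 0)
    else (if (k : ℕ) < (j : ℕ) ∨ (k : ℕ) = (j : ℕ) + 1 then 1 else 0)

/-- The permutation matrix of `σ`, acting on coordinates of `V`: `(P_σ v) k = v (σ⁻¹ k)`. -/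
def permMat (g : ℕ) (σ : Equiv.Perm (Fin (2*g+2))) :
    Matrix (Fin (2*g+2)) (Fin (2*g+2)) (ZMod 2) :=
  Matrix.of fun k j => if σ j = k then 1 else 0

/-- `A ∈ Sp_{2g}(ℤ/2ℤ)` is the matrix (w.r.t. the symplectic basis carried by `ψ`) of the
action of the permutation `σ ∈ S_{2g+2}` on `W = t^⊥/span(t)`: this says that each column of
`Ψ·A − P_σ·Ψ` lies in `span(t)`, i.e. `ψ(A·m) ≡ σ·ψ(m) mod t` for every `m ∈ M`.
The embedded copy of `S_{2g+2}` inside `Sp_{2g}(ℤ/2ℤ)` is the set of matrices representing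
some permutation in this sense. -/
def representsPerm (g : ℕ) (A : Matrix (Fin (2*g)) (Fin (2*g)) (ZMod 2))
    (σ : Equiv.Perm (Fin (2*g+2))) : Prop :=
  ∀ j, (fun k => (PsiMat g * A - permMat g σ * PsiMat g) k j) ∈ tline g

/-- Entrywise mod-2 reduction `GL_{2g}(ℤ_2) → GL_{2g}(ℤ/2ℤ)`. -/
noncomputable def redMod2 (g : ℕ) : GL (Fin (2*g)) ℤ_[2] →* GL (Fin (2*g)) (ZMod 2) :=
  Units.map ((PadicInt.toZMod).mapMatrix.toMonoidHom)

/-!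
Let `K` be the kernel of `H → H(2)^ab × ℤ_2ˣ` and `C = [H, H]`. These two groups have the same
reduction mod 2, so `K` lies in the closure of `C` as soon as every `1 + 2^k B ∈ K` with `k ≥ 1` is
congruent mod `2^(k+1)` to an element of `C`. Reduced mod 2, such a `B` lies in the Lie algebra of
`Sp_{2g}` over `ℤ/2ℤ`. Right multiplication by `Ω` identifies this Lie algebra with the space of
symmetric matrices, so it is spanned by the dyads `x ↦ ω(x, v) v`, where `v` runs over the classes
in `W` of `e_i + e_j` with `i, j ≤ 2g+1`. The transvections along these `v` are the transpositions
of `S_{2g+1}`. A similitude of multiplier `-1` fixing `v` conjugates the transvection `T` along `v`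
with coefficient `c` to its inverse, so that `T^2`, of coefficient `2c`, is a commutator; taking
`c = 2^(k-1)` and `diag(1, -1, 1, -1, …)` yields one of the dyads, and conjugation by lifts of
transpositions to `H` yields all the others.
-/

open scoped commutatorElement

section AlternatingMatrix

variable {ι R : Type*} [Fintype ι] [CommRing R]

lemma dotProduct_mulVec_self_eq_zero {A : Matrix ι ι R} (hskew : Aᵀ = -A)
    (hdiag : ∀ i, A i i = 0) (v : ι → R) : v ⬝ᵥ A *ᵥ v = 0 := by
  classical
  have hentry (i j : ι) : A i j = -A j i := congr_fun₂ hskew j i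
  simp only [dotProduct, mulVec, Finset.mul_sum,
    ← Finset.sum_product' (f := fun i j => v i * (A i j * v j))]
  refine Finset.sum_involution (fun x _ => x.swap) (fun x _ => ?_) (fun x _ hx hswap => hx ?_)
    (fun x _ => Finset.mem_univ _) (fun x _ => Prod.swap_swap x)
  · rw [Prod.fst_swap, Prod.snd_swap, hentry x.1 x.2]
    ring
  · rw [show x.2 = x.1 from congrArg Prod.fst hswap, hdiag, zero_mul, mul_zero]

end AlternatingMatrix

section Symplectic

variable {g : ℕ} {R : Type} [CommRing R]

lemma OmegaMat_apply_self (i : Fin (2 * g)) : OmegaMat g R i i = 0 := by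
  simp [OmegaMat]

lemma transpose_OmegaMat : (OmegaMat g R)ᵀ = -OmegaMat g R := by
  ext i j
  simp only [OmegaMat, transpose_apply, of_apply, Matrix.neg_apply]
  split_ifs <;> first | omega | simp

lemma OmegaMat_mul_self : OmegaMat g R * OmegaMat g R = -1 := by
  ext i j
  have hi := i.2
  let partner : Fin (2 * g) := ⟨if (i : ℕ) % 2 = 0 then i + 1 else i - 1, by split_ifs <;> omega⟩
  have hpartner : (partner : ℕ) = if (i : ℕ) % 2 = 0 then (i : ℕ) + 1 else i - 1 := rfl
  rw [mul_apply, Finset.sum_eq_single partner]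
  · simp only [OmegaMat, of_apply, Matrix.neg_apply, one_apply, Fin.ext_iff, hpartner]
    split_ifs <;> first | omega | simp
  · intro b _ hb
    have hb' : (b : ℕ) ≠ partner := fun h => hb (Fin.ext h)
    rw [hpartner] at hb'
    simp only [OmegaMat, of_apply]
    split_ifs at hb' ⊢ <;> first | omega | simp
  · exact fun h => absurd (Finset.mem_univ _) h

lemma dotProduct_OmegaMat_mulVec_self (v : Fin (2 * g) → R) : v ⬝ᵥ OmegaMat g R *ᵥ v = 0 :=
  dotProduct_mulVec_self_eq_zero transpose_OmegaMat OmegaMat_apply_self v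

lemma OmegaMat_map {S : Type} [CommRing S] (f : R →+* S) :
    (OmegaMat g R).map f = OmegaMat g S := by
  ext i j
  simp only [OmegaMat, map_apply, of_apply]
  split_ifs <;> simp

lemma eq_of_smul_OmegaMat_eq [NeZero g] {m m' : R} (h : m • OmegaMat g R = m' • OmegaMat g R) :
    m = m' := by
  have hsq := congrArg (· * OmegaMat g R) h
  simp only [smul_mul_assoc, OmegaMat_mul_self] at hsq
  simpa using congr_fun₂ hsq 0 0

/-- `S` is a symplectic similitude with multiplier `m`: it scales the form of `Ω` by `m`. -/
def IsSimilitude (S : Matrix (Fin (2 * g)) (Fin (2 * g)) R) (m : R) : Prop :=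
  Sᵀ * OmegaMat g R * S = m • OmegaMat g R

namespace IsSimilitude

variable {S T : Matrix (Fin (2 * g)) (Fin (2 * g)) R} {m n : R}

lemma one : IsSimilitude (1 : Matrix (Fin (2 * g)) (Fin (2 * g)) R) 1 := by
  simp [IsSimilitude]

lemma mul (hS : IsSimilitude S m) (hT : IsSimilitude T n) : IsSimilitude (S * T) (m * n) := by
  calc (S * T)ᵀ * OmegaMat g R * (S * T)
      = Tᵀ * (Sᵀ * OmegaMat g R * S) * T := by simp only [transpose_mul, mul_assoc]
    _ = (m * n) • OmegaMat g R := by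
      rw [hS, Matrix.mul_smul, Matrix.smul_mul, hT, smul_smul]

lemma inv {S : GL (Fin (2 * g)) R} {m : Rˣ} (hS : IsSimilitude S.1 m) :
    IsSimilitude (S⁻¹).1 (m⁻¹ : Rˣ) := by
  have hcancel : (S⁻¹).1ᵀ * (S.1ᵀ * OmegaMat g R * S.1) * (S⁻¹).1 = OmegaMat g R := by
    have h : S.1 * (S⁻¹).1 = 1 := S.mul_inv
    calc (S⁻¹).1ᵀ * (S.1ᵀ * OmegaMat g R * S.1) * (S⁻¹).1
        = (S.1 * (S⁻¹).1)ᵀ * OmegaMat g R * (S.1 * (S⁻¹).1) := by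
          simp only [transpose_mul, mul_assoc]
      _ = OmegaMat g R := by rw [h, transpose_one, Matrix.one_mul, Matrix.mul_one]
  rw [hS, Matrix.mul_smul, Matrix.smul_mul] at hcancel
  rw [IsSimilitude, ← hcancel, smul_smul, Units.inv_mul, one_smul, hcancel]

lemma transpose (hS : IsSimilitude S 1) : IsSimilitude Sᵀ 1 := by
  have hleft : -(OmegaMat g R * Sᵀ * OmegaMat g R) * S = 1 := by
    rw [Matrix.neg_mul, Matrix.mul_assoc, Matrix.mul_assoc, ← Matrix.mul_assoc Sᵀ, hS, one_smul,
      OmegaMat_mul_self, neg_neg]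
  have hright := congrArg (· * OmegaMat g R) (mul_eq_one_comm.1 hleft)
  simpa only [IsSimilitude, transpose_transpose, one_smul, Matrix.mul_neg, Matrix.neg_mul,
    Matrix.mul_assoc, OmegaMat_mul_self, Matrix.mul_one, neg_neg, Matrix.one_mul] using hright

lemma multiplier_unique [NeZero g] (hm : IsSimilitude S m) (hn : IsSimilitude S n) : m = n :=
  eq_of_smul_OmegaMat_eq (hm.symm.trans hn)

end IsSimilitude

variable (g R) in
/-- `GSpSet g R` as a subgroup. -/
def GSp : Subgroup (GL (Fin (2 * g)) R) where
  carrier := GSpSet g R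
  one_mem' := ⟨1, IsSimilitude.one⟩
  mul_mem' := by
    rintro S T ⟨m, hS⟩ ⟨n, hT⟩
    exact ⟨m * n, IsSimilitude.mul hS hT⟩
  inv_mem' := by
    rintro S ⟨m, hS⟩
    exact ⟨m⁻¹, IsSimilitude.inv hS⟩

variable (g R) in
/-- The multiplier map of the general symplectic group. -/
noncomputable def multiplier [NeZero g] : GSp g R →* Rˣ :=
  MonoidHom.mk' (fun S => S.2.choose) fun S T => Units.ext <|
    IsSimilitude.multiplier_unique (S * T).2.choose_spec
      (IsSimilitude.mul S.2.choose_spec T.2.choose_spec)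

lemma multiplier_eq_iff [NeZero g] {S : GSp g R} {m : Rˣ} :
    multiplier g R S = m ↔ IsSimilitude S.1.1 (m : R) := by
  have hS : IsSimilitude S.1.1 (multiplier g R S : R) := S.2.choose_spec
  exact ⟨fun h => h ▸ hS, fun h => Units.ext (hS.multiplier_unique h)⟩

/-- The endomorphism `x ↦ ω(x, v) v`, where `ω(x, y) = xᵀ Ω y`: the infinitesimal symplectic
transvection along `v`. -/
def sympDyad (v : Fin (2 * g) → R) : Matrix (Fin (2 * g)) (Fin (2 * g)) R :=
  vecMulVec v (OmegaMat g R *ᵥ v)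

lemma sympDyad_mul_self (v : Fin (2 * g) → R) : sympDyad v * sympDyad v = 0 := by
  rw [sympDyad, vecMulVec_mul_vecMulVec, dotProduct_comm, dotProduct_OmegaMat_mulVec_self,
    zero_smul, vecMulVec_zero]

lemma OmegaMat_mul_sympDyad (v : Fin (2 * g) → R) :
    OmegaMat g R * sympDyad v = vecMulVec (OmegaMat g R *ᵥ v) (OmegaMat g R *ᵥ v) :=
  mul_vecMulVec ..

lemma sympDyad_map {S : Type} [CommRing S] (f : R →+* S) (v : Fin (2 * g) → R) :
    (sympDyad v).map f = sympDyad (f ∘ v) := by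
  rw [sympDyad, sympDyad, ← OmegaMat_map f]
  ext i j
  simp [vecMulVec_apply, RingHom.map_mulVec]

lemma IsSimilitude.sympDyad_mulVec_mul {S : Matrix (Fin (2 * g)) (Fin (2 * g)) R} {m : R}
    (hS : IsSimilitude S m) (v : Fin (2 * g) → R) :
    sympDyad (S *ᵥ v) * S = m • (S * sympDyad v) := by
  have hrow : (OmegaMat g R *ᵥ S *ᵥ v) ᵥ* S = m • OmegaMat g R *ᵥ v := by
    rw [← mulVec_transpose, mulVec_mulVec, mulVec_mulVec, hS, smul_mulVec]
  rw [sympDyad, vecMulVec_mul, hrow, vecMulVec_smul, sympDyad, mul_vecMulVec]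

lemma IsSimilitude.sympDyad_mulVec {S : GL (Fin (2 * g)) R} (hS : IsSimilitude S.1 1)
    (v : Fin (2 * g) → R) : sympDyad (S.1 *ᵥ v) = S.1 * sympDyad v * S⁻¹.1 := by
  have hcancel : S.1 * S⁻¹.1 = 1 := S.mul_inv
  rw [← one_smul R (S.1 * sympDyad v), ← hS.sympDyad_mulVec_mul, mul_assoc, hcancel,
    Matrix.mul_one]

lemma one_add_smul_sympDyad_mul (v : Fin (2 * g) → R) (c d : R) :
    (1 + c • sympDyad v) * (1 + d • sympDyad v) = 1 + (c + d) • sympDyad v := by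
  simp only [add_mul, mul_add, Matrix.one_mul, Matrix.mul_one, smul_mul_smul_comm,
    sympDyad_mul_self, smul_zero, add_zero, add_smul]
  abel

/-- The symplectic transvection `x ↦ x + c ω(x, v) v`, where `ω(x, y) = xᵀ Ω y`. -/
def symplecticTransvection (v : Fin (2 * g) → R) (c : R) : GL (Fin (2 * g)) R where
  val := 1 + c • sympDyad v
  inv := 1 + (-c) • sympDyad v
  val_inv := by rw [one_add_smul_sympDyad_mul, add_neg_cancel, zero_smul, add_zero]
  inv_val := by rw [one_add_smul_sympDyad_mul, neg_add_cancel, zero_smul, add_zero]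

namespace symplecticTransvection

@[simp]
lemma coe (v : Fin (2 * g) → R) (c : R) :
    (symplecticTransvection v c).1 = 1 + c • sympDyad v :=
  rfl

@[simp]
lemma zero (v : Fin (2 * g) → R) : symplecticTransvection v 0 = 1 :=
  Units.ext (by simp)

lemma mul (v : Fin (2 * g) → R) (c d : R) :
    symplecticTransvection v c * symplecticTransvection v d = symplecticTransvection v (c + d) :=
  Units.ext (one_add_smul_sympDyad_mul v c d)

lemma isSimilitude (v : Fin (2 * g) → R) (c : R) :
    IsSimilitude (symplecticTransvection v c).1 1 := by
  have hleft : (sympDyad v)ᵀ * OmegaMat g R = -(OmegaMat g R * sympDyad v) := by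
    have htr := congrArg transpose (OmegaMat_mul_sympDyad v)
    rw [transpose_mul, transpose_vecMulVec, transpose_OmegaMat, ← OmegaMat_mul_sympDyad] at htr
    rw [← htr, Matrix.mul_neg, neg_neg]
  simp only [IsSimilitude, coe, transpose_add, transpose_one, transpose_smul, add_mul, mul_add,
    Matrix.one_mul, Matrix.mul_one, Matrix.smul_mul, Matrix.mul_smul, hleft, Matrix.neg_mul,
    Matrix.mul_assoc, sympDyad_mul_self, Matrix.mul_zero, one_smul]
  simp

lemma map {S : Type} [CommRing S] (f : R →+* S) (v : Fin (2 * g) → R) (c : R) :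
    GeneralLinearGroup.map f (symplecticTransvection v c) =
      symplecticTransvection (f ∘ v) (f c) := by
  ext i j
  simp [← sympDyad_map f, one_apply, apply_ite f]

lemma mul_eq_mul {S : GL (Fin (2 * g)) R} {m : R} (hS : IsSimilitude S.1 m)
    (v : Fin (2 * g) → R) (c : R) :
    S * symplecticTransvection v (m * c) = symplecticTransvection (S.1 *ᵥ v) c * S := by
  refine Units.ext ?_
  simp only [Units.val_mul, coe, mul_add, add_mul, Matrix.mul_one, Matrix.one_mul,
    Matrix.mul_smul, Matrix.smul_mul, hS.sympDyad_mulVec_mul, smul_smul, mul_comm m c]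

lemma commutatorElement_eq {S : GL (Fin (2 * g)) R} {m : R} (hS : IsSimilitude S.1 m)
    {v : Fin (2 * g) → R} (hv : S.1 *ᵥ v = v) (c : R) :
    ⁅S, symplecticTransvection v (m * c)⁆ = symplecticTransvection v ((1 - m) * c) := by
  rw [commutatorElement_def, mul_eq_mul hS, hv, mul_inv_cancel_right, mul_inv_eq_iff_eq_mul, mul]
  ring_nf

end symplecticTransvection

variable (g) in
/-- The similitude `diag(1, u, 1, u, …)`, whose multiplier is `u`. -/
def diagSimilitude (u : Rˣ) : GL (Fin (2 * g)) R where
  val := diagonal fun i => if (i : ℕ) % 2 = 0 then 1 else u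
  inv := diagonal fun i => if (i : ℕ) % 2 = 0 then 1 else (u⁻¹ : Rˣ)
  val_inv := by
    rw [diagonal_mul_diagonal, ← diagonal_one]
    congr with i
    split_ifs <;> simp
  inv_val := by
    rw [diagonal_mul_diagonal, ← diagonal_one]
    congr with i
    split_ifs <;> simp

namespace diagSimilitude

@[simp]
lemma coe (u : Rˣ) : (diagSimilitude g u).1 =
    diagonal fun i : Fin (2 * g) => if (i : ℕ) % 2 = 0 then 1 else (u : R) :=
  rfl

lemma isSimilitude (u : Rˣ) : IsSimilitude (diagSimilitude g u).1 (u : R) := by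
  ext i j
  simp only [coe, diagonal_transpose, mul_diagonal, diagonal_mul, OmegaMat, of_apply,
    Matrix.smul_apply, smul_eq_mul]
  split_ifs <;> first | omega | simp

lemma mulVec_single_zero [NeZero g] (u : Rˣ) :
    (diagSimilitude g u).1 *ᵥ Pi.single 0 1 = Pi.single 0 1 := by
  rw [coe, diagonal_mulVec_single]
  simp

lemma map {S : Type} [CommRing S] (f : R →+* S) (u : Rˣ) :
    GeneralLinearGroup.map f (diagSimilitude g u) = diagSimilitude g (Units.map f u) := by
  ext i j
  simp [coe, diagonal_apply, apply_ite f]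

lemma one : diagSimilitude g (1 : Rˣ) = 1 :=
  Units.ext (by simp [coe])

end diagSimilitude

end Symplectic

section SymmetricGroup

variable {g : ℕ}

lemma OmegaMat_zmod_two_mul_self : OmegaMat g (ZMod 2) * OmegaMat g (ZMod 2) = 1 := by
  rw [OmegaMat_mul_self, ZModModule.neg_eq_self]

lemma transpose_OmegaMat_zmod_two : (OmegaMat g (ZMod 2))ᵀ = OmegaMat g (ZMod 2) := by
  rw [transpose_OmegaMat, ZModModule.neg_eq_self]

/-- The vector of `(ℤ/2ℤ)^{2g}` which `ψ` sends to the class of `e_k + e_l` in `W`. It is found by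
`Ω`-duality: pairing with it must be the functional `x ↦ ψ(x)_k + ψ(x)_l`. -/
def rootVec (k l : Fin (2 * g + 2)) : Fin (2 * g) → ZMod 2 :=
  OmegaMat g (ZMod 2) *ᵥ ((PsiMat g).row k + (PsiMat g).row l)

lemma OmegaMat_mulVec_rootVec (k l : Fin (2 * g + 2)) :
    OmegaMat g (ZMod 2) *ᵥ rootVec k l = (PsiMat g).row k + (PsiMat g).row l := by
  rw [rootVec, mulVec_mulVec, OmegaMat_zmod_two_mul_self, one_mulVec]

lemma rootVec_comm (k l : Fin (2 * g + 2)) : rootVec k l = rootVec l k := by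
  rw [rootVec, rootVec, add_comm]

lemma rootVec_add_rootVec (k l m : Fin (2 * g + 2)) :
    rootVec k l + rootVec l m = rootVec k m := by
  rw [rootVec, rootVec, rootVec, ← mulVec_add, ZModModule.add_add_add_cancel]

/-- The explicit form of `rootVec k (k + 1)` in the standard basis. -/
def consecutiveRoot (k : Fin (2 * g)) : Fin (2 * g) → ZMod 2 :=
  Pi.single k 1 + if (k : ℕ) = 0 then 0 else Pi.single ⟨2 * ((k - 1) / 2), by omega⟩ 1

lemma mulVec_consecutiveRoot_apply {ι : Type*} (M : Matrix ι (Fin (2 * g)) (ZMod 2))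
    (k : Fin (2 * g)) (i : ι) :
    (M *ᵥ consecutiveRoot k) i =
      M i k + if (k : ℕ) = 0 then 0 else M i ⟨2 * ((k - 1) / 2), by omega⟩ := by
  simp only [consecutiveRoot, mulVec_add, Pi.add_apply, mulVec_single_one, col_apply]
  split_ifs <;> simp

lemma rootVec_castSucc_castSucc_succ (k : Fin (2 * g)) :
    rootVec k.castSucc.castSucc k.castSucc.succ = consecutiveRoot k := by
  have hdual : OmegaMat g (ZMod 2) *ᵥ consecutiveRoot k =
      (PsiMat g).row k.castSucc.castSucc + (PsiMat g).row k.castSucc.succ := by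
    ext j
    simp only [mulVec_consecutiveRoot_apply, Pi.add_apply, row_apply, PsiMat, OmegaMat, of_apply,
      Fin.val_castSucc, Fin.val_succ]
    split_ifs <;> first | omega | rfl
  rw [rootVec, ← hdual, mulVec_mulVec, OmegaMat_zmod_two_mul_self, one_mulVec]

lemma PsiMat_mulVec_consecutiveRoot (k : Fin (2 * g)) :
    PsiMat g *ᵥ consecutiveRoot k =
      Pi.single k.castSucc.castSucc 1 + Pi.single k.castSucc.succ 1 := by
  ext i
  simp only [mulVec_consecutiveRoot_apply, Pi.add_apply, PsiMat, of_apply, Pi.single_apply,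
    Fin.ext_iff, Fin.val_castSucc, Fin.val_succ]
  split_ifs <;> first | omega | rfl

lemma rootVec_castSucc_zero_castSucc_one [NeZero g] :
    rootVec (0 : Fin (2 * g + 1)).castSucc (1 : Fin (2 * g + 1)).castSucc = Pi.single 0 1 := by
  have hone : (1 : Fin (2 * g + 1)).castSucc = 1 := Fin.ext (by simp [NeZero.pos g])
  simpa [hone, consecutiveRoot] using rootVec_castSucc_castSucc_succ (0 : Fin (2 * g))

lemma PsiMat_mulVec_rootVec_zero (k : Fin (2 * g + 1)) :
    PsiMat g *ᵥ rootVec 0 k.castSucc = Pi.single 0 1 + Pi.single k.castSucc 1 := by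
  induction k using Fin.induction with
  | zero => simp only [Fin.castSucc_zero, ZModModule.add_self, rootVec, mulVec_zero]
  | succ k ih =>
    rw [← rootVec_add_rootVec 0 k.castSucc.castSucc, Fin.castSucc_succ,
      rootVec_castSucc_castSucc_succ, mulVec_add, ih, PsiMat_mulVec_consecutiveRoot,
      ZModModule.add_add_add_cancel]

lemma PsiMat_mulVec_rootVec (k l : Fin (2 * g + 1)) :
    PsiMat g *ᵥ rootVec k.castSucc l.castSucc =
      Pi.single k.castSucc 1 + Pi.single l.castSucc 1 := by
  rw [← rootVec_add_rootVec _ 0, rootVec_comm k.castSucc, mulVec_add, PsiMat_mulVec_rootVec_zero,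
    PsiMat_mulVec_rootVec_zero, add_comm (Pi.single 0 1), ZModModule.add_add_add_cancel]

lemma permMat_eq_permMatrix (σ : Equiv.Perm (Fin (2 * g + 2))) :
    permMat g σ = σ⁻¹.permMatrix (ZMod 2) := by
  ext i j
  simp [permMat, PEquiv.toMatrix_apply, Equiv.eq_symm_apply, eq_comm]

lemma permMat_mul {ι : Type*} (σ : Equiv.Perm (Fin (2 * g + 2)))
    (M : Matrix (Fin (2 * g + 2)) ι (ZMod 2)) : permMat g σ * M = M.submatrix σ.symm id := by
  rw [permMat_eq_permMatrix, PEquiv.toMatrix_toPEquiv_mul, Equiv.Perm.inv_def]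

/-- `A` represents `σ` on the nose: `ψ (A x) = σ (ψ x)` holds in `V`, not only modulo `t`. -/
def StrictlyRepresents (A : Matrix (Fin (2 * g)) (Fin (2 * g)) (ZMod 2))
    (σ : Equiv.Perm (Fin (2 * g + 2))) : Prop :=
  PsiMat g * A = permMat g σ * PsiMat g

namespace StrictlyRepresents

variable {A : Matrix (Fin (2 * g)) (Fin (2 * g)) (ZMod 2)} {σ : Equiv.Perm (Fin (2 * g + 2))}

lemma representsPerm (h : StrictlyRepresents A σ) : representsPerm g A σ := by
  intro j
  rw [h, sub_self]
  exact zero_mem _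

lemma transpose_mulVec_row (h : StrictlyRepresents A σ) (k : Fin (2 * g + 2)) :
    Aᵀ *ᵥ (PsiMat g).row (σ k) = (PsiMat g).row k := by
  have hrow := congrArg (fun M => M.row (σ k)) (h.trans (permMat_mul σ _))
  ext j
  simpa [mulVec_transpose, vecMul, mul_apply, dotProduct] using congr_fun hrow j

lemma mulVec_rootVec (h : StrictlyRepresents A σ) (hA : IsSimilitude A 1)
    (k l : Fin (2 * g + 2)) : A *ᵥ rootVec k l = rootVec (σ k) (σ l) := by
  have htr : A * OmegaMat g (ZMod 2) * Aᵀ = OmegaMat g (ZMod 2) := by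
    simpa only [IsSimilitude, transpose_transpose, one_smul] using hA.transpose
  rw [rootVec, rootVec, ← h.transpose_mulVec_row k, ← h.transpose_mulVec_row l, ← mulVec_add,
    mulVec_mulVec, mulVec_mulVec, htr]

end StrictlyRepresents

lemma strictlyRepresents_symplecticTransvection_rootVec {k l : Fin (2 * g + 1)} (hkl : k ≠ l) :
    StrictlyRepresents (symplecticTransvection (rootVec k.castSucc l.castSucc) 1).1
      (Equiv.swap k.castSucc l.castSucc) := by
  rw [StrictlyRepresents, permMat_mul, symplecticTransvection.coe, one_smul, Matrix.mul_add,
    Matrix.mul_one, sympDyad, mul_vecMulVec, PsiMat_mulVec_rootVec, OmegaMat_mulVec_rootVec]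
  ext i j
  simp only [Matrix.add_apply, vecMulVec_apply, Pi.add_apply, Pi.single_apply, row_apply,
    Equiv.symm_swap, submatrix_apply, id]
  rcases eq_or_ne i k.castSucc with rfl | hik
  · simp [hkl, ← add_assoc, ZModModule.add_self]
  rcases eq_or_ne i l.castSucc with rfl | hil
  · simp [hkl.symm, add_comm _ (PsiMat g l.castSucc j), ← add_assoc, ZModModule.add_self]
  · simp [hik, hil, Equiv.swap_apply_of_ne_of_ne]

end SymmetricGroup

section Relation

lemma rel_of_swap {α : Type*} [DecidableEq α] {r : α → α → Prop}
    (hswap : ∀ i j k l, i ≠ j → r k l → r (Equiv.swap i j k) (Equiv.swap i j l))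
    {a b : α} (hab : a ≠ b) (h : r a b) {k l : α} (hkl : k ≠ l) : r k l := by
  have hswap' (i j k l) (hr : r k l) : r (Equiv.swap i j k) (Equiv.swap i j l) := by
    rcases eq_or_ne i j with rfl | hij
    · simpa
    · exact hswap i j k l hij hr
  have hk : r k (Equiv.swap a k b) := by simpa using hswap' a k a b h
  have hne : k ≠ Equiv.swap a k b := fun h => hab (by simpa using congrArg (Equiv.swap a k) h)
  simpa [Equiv.swap_apply_of_ne_of_ne hne hkl] using hswap' (Equiv.swap a k b) l _ _ hk

end Relation

section SymmetricMatrix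

variable {n : Type*} [DecidableEq n]

lemma single_add_single_mem {L : AddSubmonoid (Matrix n n (ZMod 2))}
    (hbasis : ∀ i, vecMulVec (Pi.single i 1) (Pi.single i 1) ∈ L)
    (hpair : ∀ i j, i ≠ j →
      vecMulVec (Pi.single i 1 + Pi.single j 1) (Pi.single i 1 + Pi.single j 1) ∈ L)
    {i j : n} (hij : i ≠ j) : single i j 1 + single j i 1 ∈ L := by
  have hpolar : single i j (1 : ZMod 2) + single j i 1 =
      vecMulVec (Pi.single i 1 + Pi.single j 1) (Pi.single i 1 + Pi.single j 1) +
        vecMulVec (Pi.single i 1) (Pi.single i 1) + vecMulVec (Pi.single j 1) (Pi.single j 1) := by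
    simp only [add_vecMulVec, vecMulVec_add, ← single_eq_single_vecMulVec_single]
    linear_combination (norm := module)
      -ZModModule.add_self (single i i (1 : ZMod 2)) - ZModModule.add_self (single j j (1 : ZMod 2))
  rw [hpolar]
  exact add_mem (add_mem (hpair i j hij) (hbasis i)) (hbasis j)

variable [Finite n]

lemma add_transpose_add_diagonal_mem {L : AddSubmonoid (Matrix n n (ZMod 2))}
    (hbasis : ∀ i, vecMulVec (Pi.single i 1) (Pi.single i 1) ∈ L)
    (hpair : ∀ i j, i ≠ j →
      vecMulVec (Pi.single i 1 + Pi.single j 1) (Pi.single i 1 + Pi.single j 1) ∈ L)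
    (U : Matrix n n (ZMod 2)) : U + Uᵀ + diagonal U.diag ∈ L := by
  induction U using Matrix.induction_on' with
  | h_zero => simp
  | h_add U V hU hV =>
    convert add_mem hU hV using 1
    rw [transpose_add, diag_add, Pi.add_def, ← diagonal_add]
    abel
  | h_std_basis i j x =>
    obtain rfl | rfl : x = 0 ∨ x = 1 := by revert x; decide
    · simp
    rcases eq_or_ne i j with rfl | hij
    · simpa [ZModModule.add_self, diagonal_single, ← single_eq_single_vecMulVec_single]
        using hbasis i
    · simpa [hij] using single_add_single_mem hbasis hpair hij

lemma isSymm_mem {L : AddSubmonoid (Matrix n n (ZMod 2))}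
    (hbasis : ∀ i, vecMulVec (Pi.single i 1) (Pi.single i 1) ∈ L)
    (hpair : ∀ i j, i ≠ j →
      vecMulVec (Pi.single i 1 + Pi.single j 1) (Pi.single i 1 + Pi.single j 1) ∈ L)
    {S : Matrix n n (ZMod 2)} (hS : S.IsSymm) : S ∈ L := by
  classical
  obtain ⟨_, -⟩ := exists_wellFoundedLT n
  let U : Matrix n n (ZMod 2) := of fun i j => if i ≤ j then S i j else 0
  have hU : U + Uᵀ + diagonal U.diag = S := by
    ext i j
    rcases lt_trichotomy i j with hij | rfl | hij
    · simp [U, hij.le, hij.not_ge, hij.ne]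
    · simp [U, ZModModule.add_self]
    · simp [U, hij.le, hij.not_ge, hij.ne', hS.apply]
  exact hU ▸ add_transpose_add_diagonal_mem hbasis hpair U

variable [Fintype n]

lemma isSymm_mem_of_basis {L : AddSubmonoid (Matrix n n (ZMod 2))} {P Q : Matrix n n (ZMod 2)}
    (hPQ : P * Q = 1) (hcol : ∀ i, vecMulVec (P.col i) (P.col i) ∈ L)
    (hpair : ∀ i j, i ≠ j → vecMulVec (P.col i + P.col j) (P.col i + P.col j) ∈ L)
    {S : Matrix n n (ZMod 2)} (hS : S.IsSymm) : S ∈ L := by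
  let conj : Matrix n n (ZMod 2) →+ Matrix n n (ZMod 2) :=
    (AddMonoidHom.mulRight Pᵀ).comp (AddMonoidHom.mulLeft P)
  have hconj (v : n → ZMod 2) : conj (vecMulVec v v) = vecMulVec (P *ᵥ v) (P *ᵥ v) := by
    simp [conj, mul_vecMulVec, vecMulVec_mul, vecMul_transpose]
  have hmem : Q * S * Qᵀ ∈ L.comap conj := by
    refine isSymm_mem (fun i => ?_) (fun i j hij => ?_) ?_
    · simpa [hconj] using hcol i
    · simpa [hconj, mulVec_add] using hpair i j hij
    · rw [Matrix.IsSymm, transpose_mul, transpose_mul, transpose_transpose, hS.eq, mul_assoc]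
  have hS' : conj (Q * S * Qᵀ) = S :=
    calc P * (Q * S * Qᵀ) * Pᵀ = (P * Q) * S * (P * Q)ᵀ := by
          simp only [transpose_mul, mul_assoc]
      _ = S := by rw [hPQ, transpose_one, Matrix.one_mul, Matrix.mul_one]
  exact hS' ▸ hmem

end SymmetricMatrix

section SymplecticLieAlgebra

variable {g : ℕ}

variable (g) in
/-- The matrix with columns `rootVec 0 1, …, rootVec 0 (2 * g)`, a basis of `(ℤ/2ℤ)^{2g}`. -/
def rootBasis : Matrix (Fin (2 * g)) (Fin (2 * g)) (ZMod 2) :=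
  of fun i j => rootVec 0 j.succ.castSucc i

lemma rootBasis_col (j : Fin (2 * g)) : (rootBasis g).col j = rootVec 0 j.succ.castSucc :=
  rfl

lemma PsiMat_submatrix_mul_rootBasis :
    (PsiMat g).submatrix (fun i : Fin (2 * g) => i.succ.castSucc) id * rootBasis g = 1 := by
  ext i j
  change (PsiMat g *ᵥ rootVec (0 : Fin (2 * g + 1)).castSucc j.succ.castSucc) i.succ.castSucc = _
  rw [PsiMat_mulVec_rootVec]
  simp [Pi.single_apply, one_apply]

/-- Over `ℤ/2ℤ`, the relation `Aᵀ Ω + Ω A = 0` defines the Lie algebra of `Sp_{2g}`. -/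
lemma mem_of_sympDyad_rootVec_mem {L : AddSubmonoid (Matrix (Fin (2 * g)) (Fin (2 * g)) (ZMod 2))}
    (hL : ∀ k l : Fin (2 * g + 1), k ≠ l → sympDyad (rootVec k.castSucc l.castSucc) ∈ L)
    {A : Matrix (Fin (2 * g)) (Fin (2 * g)) (ZMod 2)}
    (hA : Aᵀ * OmegaMat g (ZMod 2) + OmegaMat g (ZMod 2) * A = 0) : A ∈ L := by
  have hdyad (v : Fin (2 * g) → ZMod 2) :
      vecMulVec v v * OmegaMat g (ZMod 2) = sympDyad v := by
    rw [sympDyad, vecMulVec_mul, ← mulVec_transpose, transpose_OmegaMat_zmod_two]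
  have hsymm : (A * OmegaMat g (ZMod 2)).IsSymm := by
    have hcomm : Aᵀ * OmegaMat g (ZMod 2) = OmegaMat g (ZMod 2) * A := by
      rw [eq_neg_of_add_eq_zero_left hA, ZModModule.neg_eq_self]
    calc (A * OmegaMat g (ZMod 2))ᵀ
        = OmegaMat g (ZMod 2) * (Aᵀ * OmegaMat g (ZMod 2)) * OmegaMat g (ZMod 2) := by
          rw [transpose_mul, transpose_OmegaMat_zmod_two, mul_assoc, mul_assoc,
            OmegaMat_zmod_two_mul_self, Matrix.mul_one]
      _ = A * OmegaMat g (ZMod 2) := by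
          rw [hcomm, ← mul_assoc, OmegaMat_zmod_two_mul_self, Matrix.one_mul]
  have hmem : A * OmegaMat g (ZMod 2) ∈ L.comap (AddMonoidHom.mulRight (OmegaMat g (ZMod 2))) := by
    refine isSymm_mem_of_basis (mul_eq_one_comm.1 PsiMat_submatrix_mul_rootBasis)
      (fun i => ?_) (fun i j hij => ?_) hsymm
    · simpa [hdyad, rootBasis_col] using hL 0 i.succ (Fin.succ_ne_zero i).symm
    · have h := hL i.succ j.succ (by simpa)
      rw [← rootVec_add_rootVec _ 0, rootVec_comm _ 0] at h
      simpa [hdyad, rootBasis_col] using h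
  simpa [mul_assoc, OmegaMat_zmod_two_mul_self] using hmem

end SymplecticLieAlgebra

section CongruenceLayer

open Filter Topology

variable {p : ℕ} [Fact p.Prime] {n : Type*}

lemma exists_eq_smul_of_map_toZMod_eq_zero {B : Matrix n n ℤ_[p]}
    (hB : B.map PadicInt.toZMod = 0) : ∃ D : Matrix n n ℤ_[p], B = (p : ℤ_[p]) • D := by
  have hdvd (i j : n) : (p : ℤ_[p]) ∣ B i j := by
    rw [← Ideal.mem_span_singleton, ← PadicInt.maximalIdeal_eq_span_p, ← PadicInt.ker_toZMod]
    exact congr_fun₂ hB i j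
  choose D hD using hdvd
  exact ⟨of D, Matrix.ext hD⟩

lemma tendsto_pow_smul_zero (B : ℕ → Matrix n n ℤ_[p]) :
    Tendsto (fun k => (p : ℤ_[p]) ^ k • B k) atTop (𝓝 0) := by
  refine tendsto_pi_nhds.2 fun i => tendsto_pi_nhds.2 fun j => ?_
  have hp : Tendsto (fun k => (p : ℤ_[p]) ^ k) atTop (𝓝 0) :=
    tendsto_pow_atTop_nhds_zero_of_norm_lt_one ((PadicInt.norm_lt_one_iff_dvd _).2 dvd_rfl)
  exact hp.zero_mul_isBoundedUnder_le
    (isBoundedUnder_of ⟨1, fun k => PadicInt.norm_le_one (B k i j)⟩)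

variable [Fintype n] [DecidableEq n]

lemma tendsto_one_of_eq_one_add_pow_smul {u : ℕ → GL n ℤ_[p]} {B : ℕ → Matrix n n ℤ_[p]}
    (hu : ∀ k, (u k).1 = 1 + (p : ℤ_[p]) ^ k • B k) : Tendsto u atTop (𝓝 1) := by
  have hinv (k : ℕ) : (u k)⁻¹.1 = 1 + (p : ℤ_[p]) ^ k • -((u k)⁻¹.1 * B k) := by
    have hcancel : (u k)⁻¹.1 * (u k).1 = 1 := (u k).inv_mul
    rw [smul_neg, ← Matrix.mul_smul, ← sub_eq_iff_eq_add.2 ((hu k).trans (add_comm _ _)), mul_sub,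
      hcancel, Matrix.mul_one, neg_sub, add_sub_cancel]
  have htendsto (D : ℕ → Matrix n n ℤ_[p]) :
      Tendsto (fun k => 1 + (p : ℤ_[p]) ^ k • D k) atTop (𝓝 1) := by
    simpa using (tendsto_pow_smul_zero D).const_add 1
  rw [Units.isEmbedding_embedProduct.tendsto_nhds_iff]
  refine Tendsto.prodMk_nhds ?_ (MulOpposite.continuous_op.continuousAt.tendsto.comp ?_)
  · exact (htendsto B).congr fun k => (hu k).symm
  · exact (htendsto _).congr fun k => (hinv k).symm

/-- The image of `C ∩ ker (GL n ℤ_p → GL n (ℤ/p^(k+1)ℤ))` in `Mat n (ℤ/pℤ)` under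
`1 + p^(k+1) B ↦ B mod p`. -/
def congruenceLayer (C : Subgroup (GL n ℤ_[p])) (k : ℕ) : AddSubmonoid (Matrix n n (ZMod p)) where
  carrier := {A | ∃ y ∈ C, ∃ B : Matrix n n ℤ_[p],
    y.1 = 1 + (p : ℤ_[p]) ^ (k + 1) • B ∧ B.map PadicInt.toZMod = A}
  zero_mem' := ⟨1, one_mem C, 0, by simp, by simp⟩
  add_mem' := by
    rintro _ _ ⟨y, hy, B, hyB, rfl⟩ ⟨z, hz, D, hzD, rfl⟩
    refine ⟨y * z, mul_mem hy hz, B + D + (p : ℤ_[p]) ^ (k + 1) • (B * D), ?_, ?_⟩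
    · simp only [Units.val_mul, hyB, hzD, mul_add, add_mul, Matrix.one_mul, Matrix.mul_one,
        Matrix.mul_smul, Matrix.smul_mul, smul_add]
      abel
    · ext i j
      simp

lemma congruenceLayer_conj {C : Subgroup (GL n ℤ_[p])} {k : ℕ} {x : GL n ℤ_[p]}
    (hx : ∀ y ∈ C, x * y * x⁻¹ ∈ C) {A : Matrix n n (ZMod p)} (hA : A ∈ congruenceLayer C k) :
    (GeneralLinearGroup.map PadicInt.toZMod x).1 * A *
      (GeneralLinearGroup.map PadicInt.toZMod x)⁻¹.1 ∈ congruenceLayer C k := by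
  obtain ⟨y, hy, B, hyB, rfl⟩ := hA
  refine ⟨x * y * x⁻¹, hx y hy, x.1 * B * x⁻¹.1, ?_, ?_⟩
  · have hcancel : x.1 * x⁻¹.1 = 1 := x.mul_inv
    simp only [Units.val_mul, hyB, mul_add, add_mul, Matrix.mul_one, hcancel, Matrix.mul_smul,
      Matrix.smul_mul]
  · rw [Matrix.map_mul, Matrix.map_mul]
    rfl

lemma exists_eq_one_add_smul_of_map_toZMod_eq_one {x : GL n ℤ_[p]}
    (hx : GeneralLinearGroup.map PadicInt.toZMod x = 1) :
    ∃ B : Matrix n n ℤ_[p], x.1 = 1 + (p : ℤ_[p]) • B := by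
  obtain ⟨B, hB⟩ : ∃ B : Matrix n n ℤ_[p], x.1 - 1 = (p : ℤ_[p]) • B := by
    refine exists_eq_smul_of_map_toZMod_eq_zero ?_
    rw [Matrix.map_sub _ (map_sub _), Matrix.map_one _ (map_zero _) (map_one _), sub_eq_zero]
    exact congrArg Units.val hx
  exact ⟨B, by rw [← hB, add_sub_cancel]⟩

section SuccessiveApproximation

variable {C K : Subgroup (GL n ℤ_[p])}

lemma exists_inv_mul_eq_one_add_pow_succ_smul {k : ℕ}
    (hlayer : congruenceLayer K k ≤ congruenceLayer C k) {x : GL n ℤ_[p]} (hx : x ∈ K)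
    {B : Matrix n n ℤ_[p]} (hxB : x.1 = 1 + (p : ℤ_[p]) ^ (k + 1) • B) :
    ∃ c ∈ C, ∃ D : Matrix n n ℤ_[p], (c⁻¹ * x).1 = 1 + (p : ℤ_[p]) ^ (k + 2) • D := by
  obtain ⟨c, hc, B', hcB', hB'⟩ := hlayer ⟨x, hx, B, hxB, rfl⟩
  obtain ⟨E, hE⟩ : ∃ E : Matrix n n ℤ_[p], B - B' = (p : ℤ_[p]) • E := by
    refine exists_eq_smul_of_map_toZMod_eq_zero ?_
    rw [Matrix.map_sub _ (map_sub _), hB', sub_self]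
  refine ⟨c, hc, c⁻¹.1 * E, ?_⟩
  have hxc : x.1 = c.1 + (p : ℤ_[p]) ^ (k + 2) • E := by
    rw [pow_succ _ (k + 1), mul_smul, ← hE, smul_sub, hxB, hcB']
    abel
  have hcancel : c⁻¹.1 * c.1 = 1 := c.inv_mul
  rw [Units.val_mul, hxc, mul_add, hcancel, Matrix.mul_smul]

lemma exists_inv_mul_eq_one_add_pow_smul (hCK : C ≤ K)
    (hred : K.map (GeneralLinearGroup.map PadicInt.toZMod) ≤
      C.map (GeneralLinearGroup.map PadicInt.toZMod))
    (hlayer : ∀ k, congruenceLayer K k ≤ congruenceLayer C k) {x : GL n ℤ_[p]} (hx : x ∈ K)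
    (k : ℕ) : ∃ c ∈ C, ∃ B : Matrix n n ℤ_[p], (c⁻¹ * x).1 = 1 + (p : ℤ_[p]) ^ (k + 1) • B := by
  induction k with
  | zero =>
    obtain ⟨c, hc, hcx⟩ := hred (Subgroup.mem_map_of_mem _ hx)
    have hone : GeneralLinearGroup.map PadicInt.toZMod (c⁻¹ * x) = 1 := by
      rw [map_mul, map_inv, hcx, inv_mul_cancel]
    obtain ⟨B, hB⟩ := exists_eq_one_add_smul_of_map_toZMod_eq_one hone
    exact ⟨c, hc, B, by rw [zero_add, pow_one, hB]⟩
  | succ k ih =>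
    obtain ⟨c, hc, B, hB⟩ := ih
    obtain ⟨d, hd, D, hD⟩ := exists_inv_mul_eq_one_add_pow_succ_smul (hlayer k)
      (mul_mem (inv_mem (hCK hc)) hx) hB
    exact ⟨c * d, mul_mem hc hd, D, by rwa [_root_.mul_inv_rev, mul_assoc]⟩

lemma le_topologicalClosure_of_congruenceLayer_le (hCK : C ≤ K)
    (hred : K.map (GeneralLinearGroup.map PadicInt.toZMod) ≤
      C.map (GeneralLinearGroup.map PadicInt.toZMod))
    (hlayer : ∀ k, congruenceLayer K k ≤ congruenceLayer C k) : K ≤ C.topologicalClosure := by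
  intro x hx
  choose c hc B hB using exists_inv_mul_eq_one_add_pow_smul hCK hred hlayer hx
  have hone : Tendsto (fun k => (c k)⁻¹ * x) atTop (𝓝 1) :=
    tendsto_one_of_eq_one_add_pow_smul (B := fun k => (p : ℤ_[p]) • B k) fun k => by
      rw [hB, pow_succ, mul_smul]
  have hlim : Tendsto c atTop (𝓝 x) := by simpa using hone.inv.const_mul x
  exact mem_closure_of_tendsto hlim (Eventually.of_forall hc)

end SuccessiveApproximation

lemma continuous_toZMod : Continuous (PadicInt.toZMod : ℤ_[p] →+* ZMod p) := by
  refine continuous_of_continuousAt_zero _ ?_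
  rw [ContinuousAt, map_zero, nhds_discrete (ZMod p), tendsto_pure]
  filter_upwards [Metric.ball_mem_nhds 0 one_pos] with x hx
  rwa [← RingHom.mem_ker, PadicInt.ker_toZMod, PadicInt.maximalIdeal_eq_span_p,
    Ideal.mem_span_singleton, ← PadicInt.norm_lt_one_iff_dvd, ← mem_ball_zero_iff]

lemma continuous_GeneralLinearGroup_map_toZMod :
    Continuous (GeneralLinearGroup.map (n := n) (PadicInt.toZMod : ℤ_[p] →+* ZMod p)) :=
  Continuous.units_map _ (continuous_id.matrix_map continuous_toZMod)

end CongruenceLayer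

section CongruenceLayerOfSymplectic

variable {g p : ℕ} [Fact p.Prime]

lemma transpose_mul_OmegaMat_add_eq_zero_of_mem_congruenceLayer
    {C : Subgroup (GL (Fin (2 * g)) ℤ_[p])} (hC : ∀ y ∈ C, IsSimilitude y.1 1) {k : ℕ}
    {A : Matrix (Fin (2 * g)) (Fin (2 * g)) (ZMod p)} (hA : A ∈ congruenceLayer C k) :
    Aᵀ * OmegaMat g (ZMod p) + OmegaMat g (ZMod p) * A = 0 := by
  obtain ⟨y, hy, B, hyB, rfl⟩ := hA
  have hB : Bᵀ * OmegaMat g ℤ_[p] + OmegaMat g ℤ_[p] * B +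
      (p : ℤ_[p]) ^ (k + 1) • (Bᵀ * OmegaMat g ℤ_[p] * B) = 0 := by
    have hp : (p : ℤ_[p]) ^ (k + 1) ≠ 0 :=
      pow_ne_zero _ (Nat.cast_ne_zero.2 (Fact.out : p.Prime).ne_zero)
    have hy' := hC y hy
    rw [IsSimilitude, hyB, one_smul] at hy'
    refine smul_right_injective _ hp ?_
    simp only [transpose_add, transpose_one, transpose_smul, add_mul, mul_add, Matrix.one_mul,
      Matrix.mul_one, Matrix.smul_mul, Matrix.mul_smul] at hy'
    simp only [smul_add, smul_zero]
    linear_combination (norm := module) hy'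
  have hmod := congrArg (fun M => M.map (PadicInt.toZMod : ℤ_[p] →+* ZMod p)) hB
  simpa [Matrix.map_add, Matrix.map_mul, OmegaMat_map, transpose_map, Matrix.map_smul'] using hmod

end CongruenceLayerOfSymplectic

section ReductionMultiplier

variable {g : ℕ} {H : Subgroup (GL (Fin (2 * g)) ℤ_[2])}

lemma redMod2_diagSimilitude (u : ℤ_[2]ˣ) : redMod2 g (diagSimilitude g u) = 1 := by
  refine (diagSimilitude.map PadicInt.toZMod u).trans ?_
  rw [Subsingleton.elim (Units.map _ u) 1, diagSimilitude.one]

lemma diagSimilitude_mem (hpre : ∀ x ∈ GSp g ℤ_[2], redMod2 g x ∈ H.map (redMod2 g) → x ∈ H)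
    (u : ℤ_[2]ˣ) : diagSimilitude g u ∈ H :=
  hpre _ ⟨u, diagSimilitude.isSimilitude u⟩ (by rw [redMod2_diagSimilitude]; exact one_mem _)

variable [NeZero g]

/-- The map `H → H(2)^ab × ℤ_2ˣ` given by reduction mod 2 and the multiplier. -/
noncomputable def reductionMultiplierHom (hH : H ≤ GSp g ℤ_[2]) :
    H →* Abelianization (H.map (redMod2 g)) × ℤ_[2]ˣ :=
  (Abelianization.of.comp ((redMod2 g).subgroupMap H)).prod
    ((multiplier g ℤ_[2]).comp (Subgroup.inclusion hH))

lemma reductionMultiplierHom_apply (hH : H ≤ GSp g ℤ_[2]) {x : H} {u : ℤ_[2]ˣ}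
    (hx : IsSimilitude x.1.1 (u : ℤ_[2])) :
    reductionMultiplierHom hH x =
      (Abelianization.of ⟨redMod2 g x, Subgroup.mem_map_of_mem (redMod2 g) x.2⟩, u) :=
  Prod.ext rfl ((multiplier_eq_iff (S := Subgroup.inclusion hH x)).2 hx)

lemma mem_ker_reductionMultiplierHom (hH : H ≤ GSp g ℤ_[2]) {x : H} :
    x ∈ (reductionMultiplierHom hH).ker ↔
      (redMod2 g).subgroupMap H x ∈ commutator (H.map (redMod2 g)) ∧ IsSimilitude x.1.1 1 := by
  rw [reductionMultiplierHom, MonoidHom.ker_prod, Subgroup.mem_inf, ← Abelianization.ker_of,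
    ← MonoidHom.comap_ker, Subgroup.mem_comap, MonoidHom.mem_ker (f := (multiplier g _).comp _)]
  exact and_congr_right fun _ => multiplier_eq_iff

lemma isClosed_ker_reductionMultiplierHom (hH : H ≤ GSp g ℤ_[2]) :
    IsClosed ((reductionMultiplierHom hH).ker : Set H) := by
  have hval : Continuous fun x : H => x.1.1 := Units.continuous_val.comp continuous_subtype_val
  have hred : Continuous fun x : H => redMod2 g x :=
    continuous_GeneralLinearGroup_map_toZMod.comp continuous_subtype_val
  have hsub : Continuous ((redMod2 g).subgroupMap H) := hred.subtype_mk _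
  have hset : ((reductionMultiplierHom hH).ker : Set H) =
      (redMod2 g).subgroupMap H ⁻¹' commutator (H.map (redMod2 g)) ∩
        {x | IsSimilitude x.1.1 1} :=
    Set.ext fun _ => mem_ker_reductionMultiplierHom hH
  rw [hset]
  exact ((isClosed_discrete _).preimage hsub).inter
    (isClosed_eq ((hval.matrix_transpose.matrix_mul continuous_const).matrix_mul hval)
      continuous_const)

lemma toZMod_comp_single_zero_one :
    PadicInt.toZMod ∘ Pi.single 0 1 =
      rootVec (0 : Fin (2 * g + 1)).castSucc (1 : Fin (2 * g + 1)).castSucc := by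
  rw [rootVec_castSucc_zero_castSucc_one]
  ext i
  simp [Pi.single_apply, apply_ite]

variable (hpre : ∀ x ∈ GSp g ℤ_[2], redMod2 g x ∈ H.map (redMod2 g) → x ∈ H)

include hpre

lemma reductionMultiplierHom_surjective (hH : H ≤ GSp g ℤ_[2]) :
    Function.Surjective (reductionMultiplierHom hH) := by
  rintro ⟨a, u⟩
  obtain ⟨⟨_, x, hx, rfl⟩, rfl⟩ := QuotientGroup.mk_surjective a
  obtain ⟨m, hm⟩ := hH hx
  let y : H := ⟨x * diagSimilitude g (m⁻¹ * u), mul_mem hx (diagSimilitude_mem hpre _)⟩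
  have hy : IsSimilitude y.1.1 (u : ℤ_[2]) := by
    have hmul := IsSimilitude.mul hm (diagSimilitude.isSimilitude (m⁻¹ * u))
    rwa [← Units.val_mul m, mul_inv_cancel_left] at hmul
  refine ⟨y, (reductionMultiplierHom_apply hH hy).trans ?_⟩
  simp only [y, map_mul (redMod2 g), redMod2_diagSimilitude, mul_one]
  rfl

variable (hswap : ∀ k l : Fin (2 * g + 1), k ≠ l →
  symplecticTransvection (rootVec k.castSucc l.castSucc) 1 ∈ H.map (redMod2 g))

include hswap

lemma symplecticTransvection_single_mem (c : ℤ_[2]) :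
    symplecticTransvection (Pi.single 0 1) c ∈ H := by
  have hred : redMod2 g (symplecticTransvection (Pi.single 0 1) c) = _ :=
    symplecticTransvection.map PadicInt.toZMod _ c
  refine hpre _ ⟨1, symplecticTransvection.isSimilitude _ c⟩ ?_
  rw [hred, toZMod_comp_single_zero_one]
  obtain hc | hc : PadicInt.toZMod c = 0 ∨ PadicInt.toZMod c = 1 := by
    generalize PadicInt.toZMod c = d
    revert d
    decide
  · rw [hc, symplecticTransvection.zero]
    exact one_mem _
  · rw [hc]
    exact hswap 0 1 (by simp)

lemma symplecticTransvection_single_mem_commutator (c : ℤ_[2]) :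
    symplecticTransvection (Pi.single 0 1) (2 * c) ∈ ⁅H, H⁆ := by
  have hcomm := symplecticTransvection.commutatorElement_eq
    (diagSimilitude.isSimilitude (-1)) (diagSimilitude.mulVec_single_zero (g := g) (-1)) c
  rw [Units.val_neg, Units.val_one, sub_neg_eq_add, one_add_one_eq_two] at hcomm
  exact hcomm ▸ Subgroup.commutator_mem_commutator (diagSimilitude_mem hpre _)
    (symplecticTransvection_single_mem hpre hswap _)

lemma sympDyad_rootVec_zero_one_mem_congruenceLayer (m : ℕ) :
    sympDyad (rootVec (0 : Fin (2 * g + 1)).castSucc (1 : Fin (2 * g + 1)).castSucc) ∈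
      congruenceLayer ⁅H, H⁆ m := by
  refine ⟨_, symplecticTransvection_single_mem_commutator hpre hswap (2 ^ m),
    sympDyad (Pi.single 0 1), ?_, ?_⟩
  · rw [symplecticTransvection.coe, pow_succ', Nat.cast_ofNat]
  · rw [sympDyad_map, toZMod_comp_single_zero_one]

lemma sympDyad_rootVec_mem_congruenceLayer (m : ℕ) {k l : Fin (2 * g + 1)} (hkl : k ≠ l) :
    sympDyad (rootVec k.castSucc l.castSucc) ∈ congruenceLayer ⁅H, H⁆ m := by
  refine rel_of_swap (r := fun k l : Fin (2 * g + 1) =>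
    sympDyad (rootVec k.castSucc l.castSucc) ∈ congruenceLayer ⁅H, H⁆ m)
    (fun i j k l hij h => ?_) (by simp)
    (sympDyad_rootVec_zero_one_mem_congruenceLayer hpre hswap m) hkl
  have hT := symplecticTransvection.isSimilitude (rootVec i.castSucc j.castSucc) 1
  obtain ⟨x, hx, hxT⟩ := hswap i j hij
  have hconj := congruenceLayer_conj
    (fun y => (Subgroup.mem_normalizer_iff.1 (Subgroup.normalizer_commutator_ge_left H H hx) y).1) h
  rw [show GeneralLinearGroup.map PadicInt.toZMod x = _ from hxT, ← hT.sympDyad_mulVec,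
    (strictlyRepresents_symplecticTransvection_rootVec hij).mulVec_rootVec hT] at hconj
  rwa [(Fin.castSucc_injective _).swap_apply, (Fin.castSucc_injective _).swap_apply] at hconj

lemma ker_reductionMultiplierHom_eq_closure (hH : H ≤ GSp g ℤ_[2]) :
    ((reductionMultiplierHom hH).ker : Set H) = closure (commutator H : Set H) := by
  refine subset_antisymm ?_ (closure_minimal (Abelianization.commutator_subset_ker _)
    (isClosed_ker_reductionMultiplierHom hH))
  let K := (reductionMultiplierHom hH).ker.map H.subtype
  have hCK : ⁅H, H⁆ ≤ K := by
    rw [← Subgroup.map_subtype_commutator]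
    exact Subgroup.map_mono (Abelianization.commutator_subset_ker _)
  have hsymp : ∀ y ∈ K, IsSimilitude y.1 1 := by
    rintro _ ⟨y, hy, rfl⟩
    exact ((mem_ker_reductionMultiplierHom hH).1 hy).2
  have hred : K.map (redMod2 g) ≤ ⁅H, H⁆.map (redMod2 g) := by
    rintro _ ⟨_, ⟨y, hy, rfl⟩, rfl⟩
    have hy' := ((mem_ker_reductionMultiplierHom hH).1 hy).1
    rw [Subgroup.map_commutator, ← Subgroup.map_subtype_commutator]
    exact Subgroup.mem_map_of_mem (H.map (redMod2 g)).subtype hy'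
  have hlayer (m : ℕ) : congruenceLayer K m ≤ congruenceLayer ⁅H, H⁆ m := fun A hA =>
    mem_of_sympDyad_rootVec_mem
      (fun _ _ => sympDyad_rootVec_mem_congruenceLayer hpre hswap m)
      (transpose_mul_OmegaMat_add_eq_zero_of_mem_congruenceLayer hsymp hA)
  intro x hx
  rw [closure_subtype]
  have hx' := le_topologicalClosure_of_congruenceLayer_le hCK hred hlayer
    (Subgroup.mem_map_of_mem H.subtype hx)
  rwa [← Subgroup.map_subtype_commutator] at hx'

end ReductionMultiplier

theorem maximal_monodromy_stmt3_general {g : ℕ} [NeZero g] {H : Subgroup (GL (Fin (2 * g)) ℤ_[2])}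
    (hH : H ≤ GSp g ℤ_[2])
    (hpre : ∀ x ∈ GSp g ℤ_[2], redMod2 g x ∈ H.map (redMod2 g) → x ∈ H)
    (hS : ∀ A : GL (Fin (2 * g)) (ZMod 2),
      (∃ σ : Equiv.Perm (Fin (2 * g + 2)), σ (Fin.last _) = Fin.last _ ∧ representsPerm g A.1 σ) →
      A ∈ H.map (redMod2 g)) :
    ∃ f : H →* Abelianization (H.map (redMod2 g)) × ℤ_[2]ˣ,
      (∀ (x : H) (u : ℤ_[2]ˣ), IsSimilitude x.1.1 (u : ℤ_[2]) →
        f x = (Abelianization.of ⟨redMod2 g x, Subgroup.mem_map_of_mem (redMod2 g) x.2⟩, u)) ∧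
      Function.Surjective f ∧ (f.ker : Set H) = closure (commutator H : Set H) := by
  have hswap (k l : Fin (2 * g + 1)) (hkl : k ≠ l) :
      symplecticTransvection (rootVec k.castSucc l.castSucc) 1 ∈ H.map (redMod2 g) :=
    hS _ ⟨Equiv.swap k.castSucc l.castSucc,
      Equiv.swap_apply_of_ne_of_ne k.castSucc_ne_last.symm l.castSucc_ne_last.symm,
      (strictlyRepresents_symplecticTransvection_rootVec hkl).representsPerm⟩
  exact ⟨reductionMultiplierHom hH, fun x u hu => reductionMultiplierHom_apply hH hu,
    reductionMultiplierHom_surjective hpre hH, ker_reductionMultiplierHom_eq_closure hpre hswap hH⟩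

/-- Let `g ≥ 2` and let `H ⊆ GSp_{2g}(ℤ_2)` be a subgroup which is the full preimage (inside
`GSp_{2g}(ℤ_2)`, under mod-2 reduction) of its mod-2 image `H(2)`, and whose mod-2 image
contains the embedded copy of `S_{2g+1}`. Then the homomorphism
`H → (H(2))^{ab} × (ℤ_2)^×`, whose first component is mod-2 reduction followed by
abelianization and whose second component is the multiplier map, induces an isomorphism
`H/[H,H]‾ ≅ (H(2))^{ab} × (ℤ_2)^×`; equivalently, this homomorphism is surjective and its
kernel is the closure of the commutator subgroup of `H`. -/
theorem maximal_monodromy_stmt3 (g : ℕ) (hg : 2 ≤ g)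
    (H : Subgroup (GL (Fin (2*g)) ℤ_[2]))
    (hGSp : (H : Set (GL (Fin (2*g)) ℤ_[2])) ⊆ GSpSet g ℤ_[2])
    (hpre : ∀ x : GL (Fin (2*g)) ℤ_[2], x ∈ GSpSet g ℤ_[2] →
      redMod2 g x ∈ Subgroup.map (redMod2 g) H → x ∈ H)
    (hS : ∀ B : GL (Fin (2*g)) (ZMod 2),
      (∃ σ : Equiv.Perm (Fin (2*g+2)),
        σ ⟨2*g+1, by omega⟩ = (⟨2*g+1, by omega⟩ : Fin (2*g+2)) ∧
        representsPerm g (B : Matrix (Fin (2*g)) (Fin (2*g)) (ZMod 2)) σ) →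
      B ∈ Subgroup.map (redMod2 g) H) :
    ∃ f : ↥H →* (Abelianization ↥(Subgroup.map (redMod2 g) H)) × ℤ_[2]ˣ,
      (∀ (x : ↥H) (u : ℤ_[2]ˣ),
        ((x : GL (Fin (2*g)) ℤ_[2]) : Matrix (Fin (2*g)) (Fin (2*g)) ℤ_[2])ᵀ
            * OmegaMat g ℤ_[2] * ((x : GL (Fin (2*g)) ℤ_[2]) : Matrix (Fin (2*g)) (Fin (2*g)) ℤ_[2])
          = (u : ℤ_[2]) • OmegaMat g ℤ_[2] →
        f x = (Abelianization.of ⟨redMod2 g ↑x, Subgroup.mem_map_of_mem (redMod2 g) x.2⟩, u)) ∧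
      Function.Surjective f ∧
      (f.ker : Set ↥H) = closure ((commutator ↥H : Subgroup ↥H) : Set ↥H) := by
  have : NeZero g := ⟨by omega⟩
  exact maximal_monodromy_stmt3_general hGSp hpre hS
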